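/- Let H be a Hopf algebra over a field k and suppose r ∈ H satisfies the 1-dimensional partial comodule equations. Then r is von Neumann regular with quasi-inverse S(r): one has r·S(r)·r = r and S(r)·r·S(r) = S(r). -/

import Mathlib

open TensorProduct

/-- The five 1-dimensional partial comodule equations for an element `r` of a Hopf
algebra `H`: `ε(r) = 1`; `r ⊗ r·S(r) = r₍₁₎ ⊗ r₍₂₎·S(r)`; `r·S(r₍₁₎) ⊗ r₍₂₎ = r·S(r) ⊗ r`;
`r ⊗ S(r)·r = r₍₁₎ ⊗ S(r₍₂₎)·r`; `S(r)·r ⊗ r = S(r)·r₍₁₎ ⊗ r₍₂₎`. -/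
def OneDimPCM (k : Type*) {H : Type*} [Field k] [Ring H] [HopfAlgebra k H] (r : H) : Prop :=
  Coalgebra.counit (R := k) r = 1
  ∧ r ⊗ₜ[k] (r * HopfAlgebra.antipode (R := k) r)
      = Coalgebra.comul (R := k) r * ((1 : H) ⊗ₜ[k] HopfAlgebra.antipode (R := k) r)
  ∧ (r ⊗ₜ[k] (1 : H)) *
        (LinearMap.rTensor H (HopfAlgebra.antipode (R := k)) (Coalgebra.comul (R := k) r))
      = (r * HopfAlgebra.antipode (R := k) r) ⊗ₜ[k] r
  ∧ r ⊗ₜ[k] (HopfAlgebra.antipode (R := k) r * r)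
      = (LinearMap.lTensor H (HopfAlgebra.antipode (R := k)) (Coalgebra.comul (R := k) r))
          * ((1 : H) ⊗ₜ[k] r)
  ∧ (HopfAlgebra.antipode (R := k) r * r) ⊗ₜ[k] r
      = ((HopfAlgebra.antipode (R := k) r) ⊗ₜ[k] (1 : H)) * Coalgebra.comul (R := k) r

/-- if `r ∈ H` satisfies the 1-dimensional partial comodule equations, then
`r` is von Neumann regular with quasi-inverse `S(r)`: `r·S(r)·r = r` and
`S(r)·r·S(r) = S(r)`. -/
theorem stmt10 (k H : Type*) [Field k] [Ring H] [HopfAlgebra k H]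
    (r : H) (hr : OneDimPCM k r) :
    r * HopfAlgebra.antipode (R := k) r * r = r
    ∧ HopfAlgebra.antipode (R := k) r * r * HopfAlgebra.antipode (R := k) r
        = HopfAlgebra.antipode (R := k) r := by
  obtain ⟨h1, -, h3, -, h5⟩ := hr
  have e1 : ∀ x : H ⊗[k] H, LinearMap.mul' k H ((r ⊗ₜ[k] (1 : H)) * x)
      = r * LinearMap.mul' k H x := by
    intro x
    induction x using TensorProduct.induction_on with
    | zero => simp
    | tmul a b => simp [mul_assoc]
    | add a b ha hb => simp only [mul_add, map_add, ha, hb]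
  have e2 : ∀ (s : H) (x : H ⊗[k] H), LinearMap.mul' k H
      (LinearMap.lTensor H (HopfAlgebra.antipode k) ((s ⊗ₜ[k] (1 : H)) * x))
      = s * LinearMap.mul' k H (LinearMap.lTensor H (HopfAlgebra.antipode k) x) := by
    intro s x
    induction x using TensorProduct.induction_on with
    | zero => simp
    | tmul a b => simp [mul_assoc]
    | add a b ha hb => simp only [mul_add, map_add, ha, hb]
  constructor
  · have h := congrArg (LinearMap.mul' k H) h3
    rw [e1, HopfAlgebra.mul_antipode_rTensor_comul_apply, h1] at h
    simpa using h.symm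
  · have h := congrArg (fun x => LinearMap.mul' k H
      (LinearMap.lTensor H (HopfAlgebra.antipode k) x)) h5
    beta_reduce at h
    rw [e2, HopfAlgebra.mul_antipode_lTensor_comul_apply, h1] at h
    simpa using h
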